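/- Let t ≥ 4 and n ∈ {2^t-2, 2^t-1, 2^t, 2^t+1}. Then w_3^{2^{t-1}-2} ∉ I_{n,4} and w_3^{2^{t-1}-1} ∈ I_{n,4}; that is, the image of w_3 in the quotient ring F_2[w_2,w_3,w_4]/I_{n,4} has height exactly 2^{t-1}-2. (This expresses that the height of the Stiefel–Whitney class w̃_3 in H^*(G̃_{n,4}; F_2) equals 2^{t-1}-2.) -/

import Mathlib

open MvPolynomial

/-- The polynomials `g_r = g_r^{(4)}` in `F_2[w_2,w_3,w_4]` (variables `X 0 = w_2`,
`X 1 = w_3`, `X 2 = w_4`): `g_0 = 1`, `g_r = 0` for `r < 0`, and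
`g_r = w_2·g_{r-2} + w_3·g_{r-3} + w_4·g_{r-4}` for `r ≥ 1`. -/
noncomputable def g4 : ℤ → MvPolynomial (Fin 3) (ZMod 2)
  | r =>
    if r ≤ 0 then (if r = 0 then 1 else 0)
    else X 0 * g4 (r - 2) + X 1 * g4 (r - 3) + X 2 * g4 (r - 4)
  termination_by r => r.toNat
  decreasing_by all_goals omega

/-- The ideal `I_{n,4} = (g_{n-3}, g_{n-2}, g_{n-1}, g_n)` of `F_2[w_2,w_3,w_4]`. -/
noncomputable def I4 (n : ℤ) : Ideal (MvPolynomial (Fin 3) (ZMod 2)) :=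
  Ideal.span {g4 (n - 3), g4 (n - 2), g4 (n - 1), g4 n}

/-!
Squaring in characteristic two gives `g_{2r} = g_r² + w₂ g_{r-1}² + w₄ g_{r-2}²` and
`g_{2r+1} = w₃ g_{r-1}²`. Hence `g_{2^t-3} = 0`, and if `(a, b, c)` are the `g_r` with
`r = 2^t-1, 2^t-2, 2^t-4`, then those with `r = 2^{t+1}-1, 2^{t+1}-2, 2^{t+1}-4` are
`(A, B, C) = (w₃ b², a² + w₂ b², b² + w₄ c²)`.

Inductively `a B + b A = w₃ ^ (2^t - 1)`, which puts this power into `I_{2^{t+1}+1}`. For the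
other half, suppose `(w₃ u)² ∈ I_{2^{t+1}-2} = (w₃ c², B, C)`. Since `w₃` is regular modulo
`(B, C)`, it can be cancelled, and `w₃ u²` lies in the ideal generated by `a², b², c²`, the
Frobenius power of `I_{2^t-1} = (a, b, c)`. Over `𝔽₂[w₂², w₃², w₄²]` the polynomial ring is free
with `w₃` as a basis element, and taking the coordinate at `w₃` gives `u ∈ I_{2^t-1}`. This
descends from `2^{t+1}` to `2^t`, down to `w₃² ∉ I_7`, which holds because `wᵢ ↦ xⁱ` maps `I_7`
into `(x⁷)`.
-/

open Ideal

section ColonByRegularElement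

variable {R : Type*} [CommRing R] {x y b c u : R}

lemma mem_span_pair_pow_of_mul_mem (hy : ∀ z, x ∣ y * z → x ∣ z)
    (hc : ∀ z, c * z ∈ span {x, y} → z ∈ span {x, y}) (m : ℕ) :
    ∀ z, c * z ∈ span {x, y ^ m} → z ∈ span {x, y ^ m} := by
  induction m with
  | zero => simp [span_pair_comm (x := x), span_insert, span_singleton_one]
  | succ m ih =>
    intro z hz
    obtain ⟨α, β, hαβ⟩ := mem_span_pair.1 hz
    obtain ⟨p, q, rfl⟩ := mem_span_pair.1 <|
      hc z (mem_span_pair.2 ⟨α, β * y ^ m, by rw [← hαβ]; ring⟩)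
    obtain ⟨δ, hδ⟩ := hy (c * q - β * y ^ m) ⟨α - c * p, by linear_combination -hαβ⟩
    obtain ⟨r, s, rfl⟩ := mem_span_pair.1 <|
      ih q (mem_span_pair.2 ⟨δ, β, by linear_combination -hδ⟩)
    exact mem_span_pair.2 ⟨p + r * y, s, by ring⟩

lemma mem_span_pair_of_mul_mem (hx : IsLeftRegular x) (hb : ∀ z, x ∣ b * z → x ∣ z)
    (hc : ∀ z, c * z ∈ span {x, b} → z ∈ span {x, b}) (hu : x * u ∈ span {b, c}) :
    u ∈ span {b, c} := by
  obtain ⟨β, γ, hβγ⟩ := mem_span_pair.1 hu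
  obtain ⟨p, q, rfl⟩ := mem_span_pair.1 <|
    hc γ (mem_span_pair.2 ⟨u, -β, by linear_combination -hβγ⟩)
  obtain ⟨δ, hδ⟩ := hb (β + c * q) ⟨u - c * p, by linear_combination hβγ⟩
  refine mem_span_pair.2 ⟨δ, p, hx ?_⟩
  linear_combination hβγ - b * hδ

end ColonByRegularElement

section FrobeniusPower

variable {σ R : Type*} [CommSemiring R]

lemma nsmul_le_nsmul_add_iff {p : ℕ} {e s m : σ →₀ ℕ} (he : ∀ i, e i < p) :
    p • s ≤ p • m + e ↔ s ≤ m := by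
  refine ⟨fun h i ↦ ?_, fun h ↦ le_add_right (nsmul_le_nsmul_right h p)⟩
  have hi : p * s i < p * (m i + 1) := (h i).trans_lt (by simp [mul_add, he i])
  exact Nat.lt_succ_iff.1 (lt_of_mul_lt_mul_left' hi)

lemma pow_mem_map_expand {p : ℕ} [Fact p.Prime] {I : Ideal (MvPolynomial σ (ZMod p))}
    {f : MvPolynomial σ (ZMod p)} (hf : f ∈ I) : f ^ p ∈ I.map (expand p) :=
  expand_zmod f ▸ mem_map_of_mem _ hf

variable (p : ℕ) [NeZero p] (e : σ →₀ ℕ)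

lemma nsmul_add_injective : Function.Injective fun m : σ →₀ ℕ ↦ p • m + e :=
  (add_left_injective e).comp (nsmul_right_injective (NeZero.ne p))

/-- The polynomial ring is free over the image of `expand p` on the monomials with all exponents
below `p`. For such an exponent `e`, `expandCoord p e f` is the preimage under `expand p` of the
coordinate of `f` at the monomial with exponent `e`: its coefficient at `m` is that of `f` at
`p • m + e`. -/
noncomputable def expandCoord : MvPolynomial σ R →ₗ[R] MvPolynomial σ R :=
  (AddMonoidAlgebra.coeffLinearEquiv R).symm.toLinearMap ∘ₗ
    Finsupp.lcomapDomain _ (nsmul_add_injective p e) ∘ₗ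
      (AddMonoidAlgebra.coeffLinearEquiv R).toLinearMap

@[simp]
lemma coeff_expandCoord (f : MvPolynomial σ R) (m : σ →₀ ℕ) :
    coeff m (expandCoord p e f) = coeff (p • m + e) f := rfl

variable {p e}

lemma expandCoord_expand_mul (he : ∀ i, e i < p) (f h : MvPolynomial σ R) :
    expandCoord p e (expand p f * h) = f * expandCoord p e h := by
  classical
  induction f using MvPolynomial.induction_on' with
  | monomial s r =>
    ext m
    rw [coeff_expandCoord, expand_monomial, coeff_monomial_mul', coeff_monomial_mul',
      coeff_expandCoord]
    by_cases hsm : s ≤ m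
    · rw [if_pos hsm, if_pos ((nsmul_le_nsmul_add_iff he).2 hsm)]
      obtain ⟨d, rfl⟩ := exists_add_of_le hsm
      rw [smul_add, add_assoc, add_tsub_cancel_left, add_tsub_cancel_left]
    · rw [if_neg hsm, if_neg (mt (nsmul_le_nsmul_add_iff he).1 hsm)]
  | add f₁ f₂ h₁ h₂ => rw [map_add, add_mul, map_add, h₁, h₂, add_mul]

lemma expandCoord_monomial : expandCoord p e (monomial e (1 : R)) = 1 := by
  classical
  ext m
  rw [coeff_expandCoord, coeff_monomial, coeff_one]
  exact if_congr (by simpa using (nsmul_add_injective p e).eq_iff (a := 0) (b := m)) rfl rfl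

lemma expandCoord_mem_of_mem_map_expand (he : ∀ i, e i < p) {I : Ideal (MvPolynomial σ R)}
    {f : MvPolynomial σ R} (hf : f ∈ I.map (expand p)) : expandCoord p e f ∈ I := by
  suffices h : ∀ a, expandCoord p e (f * a) ∈ I by simpa using h 1
  refine Submodule.span_induction (fun f hf a ↦ ?_) (by simp) ?_ ?_ hf
  · obtain ⟨f, hfI, rfl⟩ := hf
    exact expandCoord_expand_mul he f a ▸ I.mul_mem_right _ hfI
  · intro f₁ f₂ _ _ h₁ h₂ a
    simpa only [add_mul, map_add] using I.add_mem (h₁ a) (h₂ a)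
  · intro b f _ h a
    rw [smul_eq_mul, mul_comm b, mul_assoc]
    exact h (b * a)

lemma mem_of_expand_mul_monomial_mem_map_expand (he : ∀ i, e i < p) {I : Ideal (MvPolynomial σ R)}
    {u : MvPolynomial σ R} (hu : expand p u * monomial e 1 ∈ I.map (expand p)) : u ∈ I := by
  simpa only [expandCoord_expand_mul he, expandCoord_monomial, mul_one]
    using expandCoord_mem_of_mem_map_expand he hu

end FrobeniusPower

lemma mem_span_X_image_of_X_pow_mul_mem {σ R : Type*} [CommSemiring R] {s : Set σ} {j : σ}
    (hj : j ∉ s) {k : ℕ} {f : MvPolynomial σ R}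
    (hf : X j ^ k * f ∈ span (X '' s : Set (MvPolynomial σ R))) :
    f ∈ span (X '' s : Set (MvPolynomial σ R)) := by
  classical
  rw [mem_ideal_span_X_image] at hf ⊢
  intro m hm
  obtain ⟨i, his, hi⟩ := hf (Finsupp.single j k + m) <| by
    rwa [mem_support_iff, X_pow_eq_monomial, coeff_monomial_mul, one_mul, ← mem_support_iff]
  have hij : j ≠ i := fun h ↦ hj (h ▸ his)
  exact ⟨i, his, by simpa [hij] using hi⟩

local notation "w₂" => (X 0 : MvPolynomial (Fin 3) (ZMod 2))
local notation "w₃" => (X 1 : MvPolynomial (Fin 3) (ZMod 2))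
local notation "w₄" => (X 2 : MvPolynomial (Fin 3) (ZMod 2))

lemma g4_of_neg {r : ℤ} (hr : r < 0) : g4 r = 0 := by
  rw [g4, if_pos hr.le, if_neg hr.ne]

@[simp]
lemma g4_zero : g4 0 = 1 := by
  rw [g4, if_pos le_rfl, if_pos rfl]

lemma g4_of_pos {r : ℤ} (hr : 0 < r) :
    g4 r = w₂ * g4 (r - 2) + w₃ * g4 (r - 3) + w₄ * g4 (r - 4) := by
  rw [g4, if_neg hr.not_ge]

lemma g4_two_mul_and_two_mul_add_one (r : ℤ) :
    g4 (2 * r) = g4 r ^ 2 + w₂ * g4 (r - 1) ^ 2 + w₄ * g4 (r - 2) ^ 2 ∧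
      g4 (2 * r + 1) = w₃ * g4 (r - 1) ^ 2 := by
  rcases lt_trichotomy r 0 with hr | rfl | hr
  · rw [g4_of_neg (by omega : 2 * r < 0), g4_of_neg (by omega : 2 * r + 1 < 0), g4_of_neg hr,
      g4_of_neg (by omega : r - 1 < 0), g4_of_neg (by omega : r - 2 < 0)]
    simp
  · simp [g4_of_neg, g4_of_pos]
  have two_eq_zero : (2 : MvPolynomial (Fin 3) (ZMod 2)) = 0 := CharTwo.two_eq_zero
  have rec_even := g4_of_pos (by omega : 0 < 2 * r)
  have rec_odd : g4 (2 * r + 1) =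
      w₂ * g4 (2 * r - 1) + w₃ * g4 (2 * r - 2) + w₄ * g4 (2 * r - 3) := by
    rw [g4_of_pos (by omega)]
    ring_nf
  obtain ⟨even₁, odd₁⟩ : g4 (2 * r - 2) =
      g4 (r - 1) ^ 2 + w₂ * g4 (r - 2) ^ 2 + w₄ * g4 (r - 3) ^ 2 ∧
        g4 (2 * r - 1) = w₃ * g4 (r - 2) ^ 2 := by
    have ih := g4_two_mul_and_two_mul_add_one (r - 1)
    ring_nf at ih ⊢
    exact ih
  obtain ⟨even₂, odd₂⟩ : g4 (2 * r - 4) =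
      g4 (r - 2) ^ 2 + w₂ * g4 (r - 3) ^ 2 + w₄ * g4 (r - 4) ^ 2 ∧
        g4 (2 * r - 3) = w₃ * g4 (r - 3) ^ 2 := by
    have ih := g4_two_mul_and_two_mul_add_one (r - 2)
    ring_nf at ih ⊢
    exact ih
  constructor
  · rw [rec_even, g4_of_pos hr, even₁, odd₂, even₂, CharTwo.add_sq, CharTwo.add_sq]
    linear_combination w₂ * w₄ * g4 (r - 3) ^ 2 * two_eq_zero
  · rw [rec_odd, odd₁, even₁, odd₂]
    linear_combination (w₂ * w₃ * g4 (r - 2) ^ 2 + w₃ * w₄ * g4 (r - 3) ^ 2) * two_eq_zero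
termination_by r.toNat

lemma g4_two_mul (r : ℤ) :
    g4 (2 * r) = g4 r ^ 2 + w₂ * g4 (r - 1) ^ 2 + w₄ * g4 (r - 2) ^ 2 :=
  (g4_two_mul_and_two_mul_add_one r).1

lemma g4_two_mul_add_one (r : ℤ) : g4 (2 * r + 1) = w₃ * g4 (r - 1) ^ 2 :=
  (g4_two_mul_and_two_mul_add_one r).2

lemma g4_two_pow_sub_three (t : ℕ) : g4 (2 ^ t - 3) = 0 := by
  induction t with
  | zero => exact g4_of_neg (by norm_num)
  | succ t ih =>
    rw [show (2 : ℤ) ^ (t + 1) - 3 = 2 * (2 ^ t - 2) + 1 by ring, g4_two_mul_add_one,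
      sub_sub, two_add_one_eq_three, ih]
    ring

lemma g4_two_pow_succ_sub_one (t : ℕ) : g4 (2 ^ (t + 1) - 1) = w₃ * g4 (2 ^ t - 2) ^ 2 := by
  convert g4_two_mul_add_one (2 ^ t - 1) using 4 <;> ring

lemma g4_two_pow_succ_sub_two (t : ℕ) :
    g4 (2 ^ (t + 1) - 2) = g4 (2 ^ t - 1) ^ 2 + w₂ * g4 (2 ^ t - 2) ^ 2 := by
  rw [show (2 : ℤ) ^ (t + 1) - 2 = 2 * (2 ^ t - 1) by ring, g4_two_mul, sub_sub, sub_sub]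
  norm_num [g4_two_pow_sub_three]

lemma g4_two_pow_succ_sub_four (t : ℕ) :
    g4 (2 ^ (t + 1) - 4) = g4 (2 ^ t - 2) ^ 2 + w₄ * g4 (2 ^ t - 4) ^ 2 := by
  rw [show (2 : ℤ) ^ (t + 1) - 4 = 2 * (2 ^ t - 2) by ring, g4_two_mul, sub_sub, sub_sub]
  norm_num [g4_two_pow_sub_three]

lemma g4_two_pow_succ_sub_five (t : ℕ) : g4 (2 ^ (t + 1) - 5) = w₃ * g4 (2 ^ t - 4) ^ 2 := by
  convert g4_two_mul_add_one (2 ^ t - 3) using 4 <;> ring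

lemma two_pow_succ_sub_one (t : ℕ) : 2 ^ (t + 1) - 1 = (2 ^ t - 1) * 2 + 1 := by
  have := Nat.one_le_two_pow (n := t)
  omega

lemma g4_two_pow_det_eq_w3_pow (t : ℕ) :
    g4 (2 ^ t - 1) * g4 (2 ^ (t + 1) - 2) + g4 (2 ^ t - 2) * g4 (2 ^ (t + 1) - 1) =
      w₃ ^ (2 ^ t - 1) := by
  induction t with
  | zero => simp [g4_of_neg]
  | succ t ih =>
    rw [two_pow_succ_sub_one, pow_succ w₃, pow_mul, ← ih]
    simp only [g4_two_pow_succ_sub_one, g4_two_pow_succ_sub_two]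
    generalize g4 (2 ^ t - 1) = a
    generalize g4 (2 ^ t - 2) = b
    grind

lemma exists_g4_two_pow_succ_sub_two_eq (t : ℕ) :
    ∃ q, g4 (2 ^ (t + 1) - 2) = w₂ ^ (2 ^ t - 1) + w₃ * q := by
  induction t with
  | zero => exact ⟨0, by simp⟩
  | succ t ih =>
    obtain ⟨q, hq⟩ := ih
    refine ⟨w₃ * g4 (2 ^ t - 2) ^ 4 + w₂ * w₃ * q ^ 2, ?_⟩
    rw [g4_two_pow_succ_sub_two, g4_two_pow_succ_sub_one, hq, CharTwo.add_sq,
      two_pow_succ_sub_one]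
    ring

lemma g4_four_mul_sub_mem (k : ℕ) : g4 (4 * k) - w₄ ^ k ∈ span {w₃, w₂} := by
  induction k with
  | zero => simp
  | succ k ih =>
    obtain ⟨a, b, hab⟩ := mem_span_pair.1 ih
    refine mem_span_pair.2 ⟨g4 (4 * k + 1) + w₄ * a, g4 (4 * k + 2) + w₄ * b, ?_⟩
    have rec_four_mul : g4 (4 * (k + 1 : ℕ)) =
        w₂ * g4 (4 * k + 2) + w₃ * g4 (4 * k + 1) + w₄ * g4 (4 * k) := by
      rw [g4_of_pos (by positivity)]
      push_cast
      ring_nf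
    rw [rec_four_mul]
    linear_combination w₄ * hab

lemma I4_antitoneOn : AntitoneOn I4 (Set.Ici 0) := by
  refine antitoneOn_of_add_one_le Set.ordConnected_Ici fun n _ hn _ ↦ ?_
  have mem (r : ℤ) (hr : r = n - 3 ∨ r = n - 2 ∨ r = n - 1 ∨ r = n) : g4 r ∈ I4 n :=
    subset_span (by rcases hr with rfl | rfl | rfl | rfl <;> simp)
  rw [I4, span_le]
  rintro x (rfl | rfl | rfl | rfl)
  · exact mem _ (by omega)
  · exact mem _ (by omega)
  · exact mem _ (by omega)
  · rw [g4_of_pos (Int.lt_add_one_of_le hn)]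
    exact add_mem (add_mem (mul_mem_left _ _ (mem _ (by omega)))
      (mul_mem_left _ _ (mem _ (by omega)))) (mul_mem_left _ _ (mem _ (by omega)))

lemma w3_dvd_of_dvd_g4_mul (t : ℕ) (z : MvPolynomial (Fin 3) (ZMod 2))
    (hz : w₃ ∣ g4 (2 ^ (t + 1) - 2) * z) : w₃ ∣ z := by
  refine ((X_prime : Prime w₃).dvd_or_dvd hz).resolve_left fun hdvd ↦ ?_
  obtain ⟨q, hq⟩ := exists_g4_two_pow_succ_sub_two_eq t
  rw [hq, dvd_add_left (dvd_mul_right _ _)] at hdvd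
  simpa [X_dvd_X] using (X_prime : Prime w₃).dvd_of_dvd_pow hdvd

lemma mem_span_of_g4_four_mul_mul_mem (k : ℕ) (z : MvPolynomial (Fin 3) (ZMod 2))
    (hz : g4 (4 * k) * z ∈ span {w₃, w₂}) : z ∈ span {w₃, w₂} := by
  have hw₄ : w₄ ^ k * z ∈ span {w₃, w₂} := by
    simpa [sub_mul] using sub_mem hz (mul_mem_right z _ (g4_four_mul_sub_mem k))
  rw [← Set.image_pair] at hw₄ ⊢
  exact mem_span_X_image_of_X_pow_mul_mem (by simp) hw₄

lemma mem_span_g4_pair_of_w3_mul_mem (t : ℕ) {u : MvPolynomial (Fin 3) (ZMod 2)}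
    (hu : w₃ * u ∈ span {g4 (2 ^ (t + 2) - 2), g4 (2 ^ (t + 2) - 4)}) :
    u ∈ span {g4 (2 ^ (t + 2) - 2), g4 (2 ^ (t + 2) - 4)} := by
  refine mem_span_pair_of_mul_mem (IsRegular.of_ne_zero (X_ne_zero 1)).left
    (w3_dvd_of_dvd_g4_mul _) ?_ hu
  obtain ⟨q, hq⟩ := exists_g4_two_pow_succ_sub_two_eq (t + 1)
  have index : (2 : ℤ) ^ (t + 2) - 4 = 4 * (2 ^ t - 1 : ℕ) := by
    push_cast [Nat.one_le_two_pow]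
    ring
  rw [hq, span_pair_add_left_mul, index]
  refine mem_span_pair_pow_of_mul_mem (fun z hz ↦ ?_) (mem_span_of_g4_four_mul_mul_mem _) _
  exact ((X_prime : Prime w₃).dvd_or_dvd hz).resolve_left (by simp [X_dvd_X])

lemma I4_two_pow_sub_one (t : ℕ) :
    I4 (2 ^ t - 1) = span {g4 (2 ^ t - 4), g4 (2 ^ t - 2), g4 (2 ^ t - 1)} := by
  rw [I4, show (2 : ℤ) ^ t - 1 - 3 = 2 ^ t - 4 by ring,
    show (2 : ℤ) ^ t - 1 - 2 = 2 ^ t - 3 by ring,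
    show (2 : ℤ) ^ t - 1 - 1 = 2 ^ t - 2 by ring, g4_two_pow_sub_three,
    Set.insert_comm, span_insert_zero]

lemma I4_two_pow_succ_sub_two (t : ℕ) :
    I4 (2 ^ (t + 1) - 2) =
      span {w₃ * g4 (2 ^ t - 4) ^ 2, g4 (2 ^ (t + 1) - 2), g4 (2 ^ (t + 1) - 4)} := by
  rw [I4, ← g4_two_pow_succ_sub_five, show (2 : ℤ) ^ (t + 1) - 2 - 3 = 2 ^ (t + 1) - 5 by ring,
    show (2 : ℤ) ^ (t + 1) - 2 - 2 = 2 ^ (t + 1) - 4 by ring,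
    show (2 : ℤ) ^ (t + 1) - 2 - 1 = 2 ^ (t + 1) - 3 by ring, g4_two_pow_sub_three,
    Set.insert_comm (g4 (2 ^ (t + 1) - 4)) 0, Set.insert_comm _ 0, span_insert_zero, Set.pair_comm]

lemma span_g4_pair_le_map_expand (t : ℕ) :
    span {g4 (2 ^ (t + 1) - 2), g4 (2 ^ (t + 1) - 4)} ≤ (I4 (2 ^ t - 1)).map (expand 2) := by
  have sq_mem (r : ℤ) (hr : r = 2 ^ t - 1 ∨ r = 2 ^ t - 2 ∨ r = 2 ^ t - 4) :
      g4 r ^ 2 ∈ (I4 (2 ^ t - 1)).map (expand 2) := by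
    refine pow_mem_map_expand ?_
    rw [I4_two_pow_sub_one]
    exact subset_span (by rcases hr with rfl | rfl | rfl <;> simp)
  rw [g4_two_pow_succ_sub_two, g4_two_pow_succ_sub_four, span_le, Set.pair_subset_iff]
  exact ⟨add_mem (sq_mem _ (by simp)) (mul_mem_left _ _ (sq_mem _ (by simp))),
    add_mem (sq_mem _ (by simp)) (mul_mem_left _ _ (sq_mem _ (by simp)))⟩

lemma mem_I4_of_w3_mul_sq_mem (t : ℕ) {u : MvPolynomial (Fin 3) (ZMod 2)}
    (hu : (w₃ * u) ^ 2 ∈ I4 (2 ^ (t + 2) - 2)) : u ∈ I4 (2 ^ (t + 1) - 1) := by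
  rw [I4_two_pow_succ_sub_two, mem_span_insert] at hu
  obtain ⟨α, v, hv, hαv⟩ := hu
  have mem_pair : w₃ * u ^ 2 - α * g4 (2 ^ (t + 1) - 4) ^ 2 ∈
      span {g4 (2 ^ (t + 2) - 2), g4 (2 ^ (t + 2) - 4)} := by
    refine mem_span_g4_pair_of_w3_mul_mem t ?_
    convert hv using 1
    linear_combination hαv
  have sq_mem : g4 (2 ^ (t + 1) - 4) ^ 2 ∈ (I4 (2 ^ (t + 1) - 1)).map (expand 2) :=
    pow_mem_map_expand (I4_two_pow_sub_one (t + 1) ▸ subset_span (by simp))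
  have w3_mul_sq_mem : w₃ * u ^ 2 ∈ (I4 (2 ^ (t + 1) - 1)).map (expand 2) := by
    simpa using add_mem (span_g4_pair_le_map_expand _ mem_pair) (mul_mem_left _ α sq_mem)
  refine mem_of_expand_mul_monomial_mem_map_expand (p := 2) (e := Finsupp.single 1 1) ?_ ?_
  · intro i
    rw [Finsupp.single_apply]
    split_ifs <;> norm_num
  · rwa [expand_zmod, mul_comm]

lemma w3_sq_not_mem_I4_seven : w₃ ^ 2 ∉ I4 7 := by
  let φ : MvPolynomial (Fin 3) (ZMod 2) →ₐ[ZMod 2] Polynomial (ZMod 2) :=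
    aeval ![Polynomial.X ^ 2, Polynomial.X ^ 3, Polynomial.X ^ 4]
  have two_eq_zero : (2 : Polynomial (ZMod 2)) = 0 := CharTwo.two_eq_zero
  have g4_four : g4 4 = w₂ ^ 2 + w₄ := by simp [g4_of_pos, g4_of_neg, sq]
  have g4_six : g4 6 = w₃ ^ 2 + w₂ ^ 3 := by
    simpa [g4_of_pos, g4_of_neg, pow_succ'] using g4_two_pow_succ_sub_two 2
  have g4_seven : g4 7 = w₃ * w₂ ^ 2 := by
    simpa [g4_of_pos, g4_of_neg] using g4_two_pow_succ_sub_one 2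
  have I4_le : I4 7 ≤ (span {Polynomial.X ^ 7}).comap φ := by
    have I4_seven : I4 7 = span {g4 4, g4 6, g4 7} := by simpa using I4_two_pow_sub_one 3
    rw [I4_seven, g4_four, g4_six, g4_seven, span_le]
    rintro x (rfl | rfl | rfl) <;>
      simp only [SetLike.mem_coe, mem_comap, mem_span_singleton, map_add, map_mul, map_pow, φ,
        aeval_X, Matrix.cons_val]
    · exact ⟨0, by linear_combination Polynomial.X ^ 4 * two_eq_zero⟩
    · exact ⟨0, by linear_combination Polynomial.X ^ 6 * two_eq_zero⟩
    · exact ⟨1, by ring⟩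
  intro hmem
  have hdvd : (Polynomial.X : Polynomial (ZMod 2)) ^ 7 ∣ Polynomial.X ^ 6 := by
    simpa [φ, mem_span_singleton, ← pow_mul] using I4_le hmem
  rw [pow_dvd_pow_iff Polynomial.X_ne_zero Polynomial.not_isUnit_X] at hdvd
  omega

lemma w3_pow_not_mem_I4_of_not_mem (t : ℕ) (ht : w₃ ^ (2 ^ (t + 1) - 2) ∉ I4 (2 ^ (t + 2) - 1)) :
    w₃ ^ (2 ^ (t + 2) - 2) ∉ I4 (2 ^ (t + 3) - 2) := by
  refine mt (fun h ↦ mem_I4_of_w3_mul_sq_mem (t + 1) ?_) ht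
  have exponent : 2 ^ (t + 2) - 2 = (2 ^ (t + 1) - 2 + 1) * 2 := by
    have := Nat.one_le_two_pow (n := t)
    rw [pow_succ 2 (t + 1), pow_succ 2 t]
    omega
  rwa [← pow_succ', ← pow_mul, ← exponent]

lemma w3_pow_not_mem_I4_two_pow_sub_one (t : ℕ) :
    w₃ ^ (2 ^ (t + 2) - 2) ∉ I4 (2 ^ (t + 3) - 1) := by
  induction t with
  | zero => simpa using w3_sq_not_mem_I4_seven
  | succ t ih =>
    have two_le : (2 : ℤ) ≤ 2 ^ (t + 1 + 3) := le_self_pow₀ (by norm_num) (by omega)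
    exact fun h ↦ w3_pow_not_mem_I4_of_not_mem _ ih <|
      I4_antitoneOn (Set.mem_Ici.2 (by omega)) (Set.mem_Ici.2 (by omega)) (by omega) h

lemma w3_pow_not_mem_I4 (t : ℕ) : w₃ ^ (2 ^ (t + 3) - 2) ∉ I4 (2 ^ (t + 4) - 2) :=
  w3_pow_not_mem_I4_of_not_mem _ (w3_pow_not_mem_I4_two_pow_sub_one t)

lemma w3_pow_mem_I4 (t : ℕ) : w₃ ^ (2 ^ t - 1) ∈ I4 (2 ^ (t + 1) + 1) := by
  rw [← g4_two_pow_det_eq_w3_pow]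
  refine add_mem (mul_mem_left _ _ (subset_span (.inl ?_)))
    (mul_mem_left _ _ (subset_span (.inr (.inl ?_)))) <;> ring_nf

/-- Theorem 3.1(2): for `t ≥ 4` and `n ∈ {2^t-2, 2^t-1, 2^t, 2^t+1}`, the image of `w_3`
in `F_2[w_2,w_3,w_4]/I_{n,4}` has height exactly `2^{t-1} - 2`, i.e.
`w_3^{2^{t-1}-2} ∉ I_{n,4}` and `w_3^{2^{t-1}-1} ∈ I_{n,4}`. -/
theorem stmt6 (t : ℕ) (ht : 4 ≤ t) (n : ℤ)
    (hn : n = 2 ^ t - 2 ∨ n = 2 ^ t - 1 ∨ n = 2 ^ t ∨ n = 2 ^ t + 1) :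
    (X 1 : MvPolynomial (Fin 3) (ZMod 2)) ^ (2 ^ (t - 1) - 2) ∉ I4 n ∧
      (X 1 : MvPolynomial (Fin 3) (ZMod 2)) ^ (2 ^ (t - 1) - 1) ∈ I4 n := by
  obtain ⟨t, rfl⟩ := Nat.exists_eq_add_of_le' ht
  have two_le : (2 : ℤ) ≤ 2 ^ (t + 4) := le_self_pow₀ (by norm_num) (by omega)
  have I4_le : I4 n ≤ I4 (2 ^ (t + 4) - 2) :=
    I4_antitoneOn (Set.mem_Ici.2 (by omega)) (Set.mem_Ici.2 (by omega)) (by omega)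
  have le_I4 : I4 (2 ^ (t + 4) + 1) ≤ I4 n :=
    I4_antitoneOn (Set.mem_Ici.2 (by omega)) (Set.mem_Ici.2 (by omega)) (by omega)
  exact ⟨fun h ↦ w3_pow_not_mem_I4 t (I4_le h), le_I4 (w3_pow_mem_I4 (t + 3))⟩
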